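/- (Classical spatial form of Lemma 4, observer synthesis.) Let a, b, c be polynomial functions with a(x) ≥ α > 0 on [0,1], ε1 > 0, and N, P1, P2 polynomial with P2(x,ξ) = P1(ξ,x) and N(x) ≥ ε1 on [0,1]. With S the operator (Sw)(x) = N(x)w(x) + ∫₀^x P1(x,ξ)w(ξ)dξ + ∫_x^1 P2(x,ξ)w(ξ)dξ and Q0,…,Q8 and the operator Q defined as in the primal Linear Operator Inequality, assume Q3 ≤ 0 and Q4(x) = 0 for all x ∈ [0,1]. Let O2 < 0 be a scalar such that ζ := −(Q5 + Q7/O2) > 0, and let O1 : [0,1] → ℝ be a continuous function satisfying (S O1)(x) = −(1/2)(O2·Q6(x) + Q8(x)) for all x ∈ [0,1]. Then for every twice continuously differentiable e : [0,1] → ℝ with e'(0) = 0 and e(1) = O2·e'(1), we have 2∫₀¹ [a(x)e''(x) + b(x)e'(x) + c(x)e(x) + O1(x)·e'(1)]·(Se)(x) dx ≤ ∫₀¹ (Qe)(x)e(x)dx − ζ·e(1)². -/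

import Mathlib

open MeasureTheory Real

noncomputable section

/-- `f` is (the restriction of) a polynomial function. -/
def IsPolyFun (f : ℝ → ℝ) : Prop := ∃ p : Polynomial ℝ, ∀ x, f x = p.eval x

/-- `f` is (the restriction of) a polynomial function of two variables. -/
def IsPolyFun2 (f : ℝ → ℝ → ℝ) : Prop :=
  ∃ p : MvPolynomial (Fin 2) ℝ, ∀ x y, f x y = MvPolynomial.eval ![x, y] p

/-- The semi-separable kernel operator
`(Sw)(x) = N(x)w(x) + ∫₀ˣ P1(x,ξ)w(ξ)dξ + ∫ₓ¹ P2(x,ξ)w(ξ)dξ`. -/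
def semisepOp (N : ℝ → ℝ) (P1 P2 : ℝ → ℝ → ℝ) (w : ℝ → ℝ) : ℝ → ℝ :=
  fun x => N x * w x + (∫ ξ in (0:ℝ)..x, P1 x ξ * w ξ)
    + ∫ ξ in x..(1:ℝ), P2 x ξ * w ξ

/-
Write `A v = a v'' + b v' + c v` and split `S e = N e + u` into its local and nonlocal parts.
Green's formula for the pair `(e², N)` turns `2⟨A e, N e⟩` into a multiplication operator, the
dissipation `-2 ∫ a N e'²` and boundary terms, because `A (e²) = 2 e A e - c e² + 2 a e'²`. For the
pair `(e, u)` it gives `2⟨e, A* u⟩` plus boundary terms, and `A* u` is again semi-separable in `e`: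
the two kernels of `S` agree on the diagonal, so only their fluxes jump there. Symmetrising that
operator yields `Q` up to the constant `-(π²/2) α ε1` in `Q0`.

The Poincaré inequality with constant `π²/4` for `e - e(0)` bounds the dissipation. Expanding
`∫ (e - e(0))²` supplies the constant in `Q0`, while the cross term and the square of `e(0)` are
compensated by `Q4 = 0` and `Q3 ≤ 0`. At `x = 1`, the self-adjointness of `S` and the equation for
`S O1` make the output injection cancel the nonlocal boundary term, leaving `-ζ e(1)²`.
-/

open Function (uncurry swap)

section Regularity

variable {n : WithTop ℕ∞}

theorem IsPolyFun.contDiff {f : ℝ → ℝ} (hf : IsPolyFun f) : ContDiff ℝ n f := by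
  obtain ⟨p, hp⟩ := hf
  rw [funext hp]
  exact p.contDiff_aeval n

theorem IsPolyFun2.contDiff {K : ℝ → ℝ → ℝ} (hK : IsPolyFun2 K) : ContDiff ℝ n (uncurry K) := by
  obtain ⟨p, hp⟩ := hK
  have hcoord : ContDiff ℝ n fun z : ℝ × ℝ => ![z.1, z.2] :=
    contDiff_pi.2 fun i => by fin_cases i <;> [exact contDiff_fst; exact contDiff_snd]
  have heval : ContDiff ℝ n fun v => MvPolynomial.eval v p :=
    (AnalyticOnNhd.eval_mvPolynomial p).contDiff
  rw [show uncurry K = _ from funext fun z => hp z.1 z.2]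
  exact heval.comp hcoord

end Regularity

section Leibniz

variable {E : Type*} [NormedAddCommGroup E] [NormedSpace ℝ E] {F F' : ℝ → ℝ → E}

theorem hasDerivAt_intervalIntegral_param (hF : Continuous (uncurry F))
    (hF' : Continuous (uncurry F')) (hFF' : ∀ x ξ, HasDerivAt (F · ξ) (F' x ξ) x) (a b x : ℝ) :
    HasDerivAt (fun t => ∫ ξ in a..b, F t ξ) (∫ ξ in a..b, F' x ξ) x := by
  obtain ⟨C, hC⟩ := ((isCompact_closedBall x 1).prod isCompact_uIcc).exists_bound_of_continuousOn
    (f := uncurry F') (s := Metric.closedBall x 1 ×ˢ Set.uIcc a b) hF'.continuousOn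
  refine (intervalIntegral.hasDerivAt_integral_of_dominated_loc_of_deriv_le
    (bound := fun _ => C) (Metric.closedBall_mem_nhds x one_pos) ?_ ?_ ?_ ?_ ?_ ?_).2
  · exact .of_forall fun t => (hF.uncurry_left t).aestronglyMeasurable
  · exact (hF.uncurry_left x).intervalIntegrable a b
  · exact (hF'.uncurry_left x).aestronglyMeasurable
  · exact .of_forall fun ξ hξ t ht => hC (t, ξ) ⟨ht, Set.uIoc_subset_uIcc hξ⟩
  · exact intervalIntegrable_const
  · exact .of_forall fun ξ _ t _ => hFF' t ξ

variable [CompleteSpace E]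

theorem hasDerivAt_intervalIntegral_param_right (hF : Continuous (uncurry F))
    (hF' : Continuous (uncurry F')) (hFF' : ∀ x ξ, HasDerivAt (F · ξ) (F' x ξ) x) (a x : ℝ) :
    HasDerivAt (fun t => ∫ ξ in a..t, F t ξ) (F x x + ∫ ξ in a..x, F' x ξ) x := by
  have hspan : Continuous (ContinuousLinearMap.toSpanSingleton ℝ : E → ℝ →L[ℝ] E) :=
    (ContinuousLinearMap.toSpanSingletonLIE ℝ E).continuous
  have hG :=
    hasStrictFDerivAt_uncurry_coprod (u := (x, x)) (f := fun t s => ∫ ξ in a..s, F t ξ)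
      (f₁ := fun t s => .toSpanSingleton ℝ (∫ ξ in a..s, F' t ξ))
      (f₂ := fun t s => .toSpanSingleton ℝ (F t s))
      (.of_forall fun z => (hasDerivAt_intervalIntegral_param hF hF' hFF' a z.2 z.1).hasFDerivAt)
      (.of_forall fun z =>
        ((hF.uncurry_left z.1).integral_hasStrictDerivAt a z.2).hasDerivAt.hasFDerivAt)
      (hspan.comp (by fun_prop :
        Continuous fun z : ℝ × ℝ => ∫ ξ in a..z.2, F' z.1 ξ)).continuousAt
      (hspan.comp hF).continuousAt
  have hdiag : HasDerivAt (fun t : ℝ => (t, t)) (1, 1) x :=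
    (hasDerivAt_id' x).prodMk (hasDerivAt_id' x)
  simpa [Function.HasUncurry.uncurry, add_comm, Function.comp_def] using
    HasFDerivAt.comp_hasDerivAt (f := fun t : ℝ => (t, t)) x hG.hasFDerivAt hdiag

-- Both sides vanish at `b = a` and have the same derivative in `b`.
theorem integral_integral_triangle_swap (hF : Continuous (uncurry F)) (a b : ℝ) :
    ∫ x in a..b, ∫ ξ in a..x, F x ξ = ∫ ξ in a..b, ∫ x in ξ..b, F x ξ := by
  have hinner : Continuous (uncurry fun t ξ => ∫ x in ξ..t, F x ξ) := by
    have hsplit : (uncurry fun t ξ => ∫ x in ξ..t, F x ξ) =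
        fun z : ℝ × ℝ => (∫ x in a..z.1, F x z.2) - ∫ x in a..z.2, F x z.2 := by
      ext ⟨t, ξ⟩
      exact (intervalIntegral.integral_interval_sub_left
        ((hF.uncurry_right ξ).intervalIntegrable _ _)
        ((hF.uncurry_right ξ).intervalIntegrable _ _)).symm
    rw [hsplit]
    fun_prop
  have hleft (t : ℝ) : HasDerivAt (fun t => ∫ x in a..t, ∫ ξ in a..x, F x ξ)
      (∫ ξ in a..t, F t ξ) t :=
    ((by fun_prop : Continuous fun x => ∫ ξ in a..x, F x ξ).integral_hasStrictDerivAt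
      a t).hasDerivAt
  have hright (t : ℝ) : HasDerivAt (fun t => ∫ ξ in a..t, ∫ x in ξ..t, F x ξ)
      (∫ ξ in a..t, F t ξ) t := by
    simpa using hasDerivAt_intervalIntegral_param_right hinner hF
      (fun t ξ => ((hF.uncurry_right ξ).integral_hasStrictDerivAt ξ t).hasDerivAt) a t
  refine congrFun (eq_of_fderiv_eq (𝕜 := ℝ) (fun t => (hleft t).differentiableAt)
    (fun t => (hright t).differentiableAt) (fun t => ?_) a (by simp)) b
  rw [(hleft t).hasFDerivAt.fderiv, (hright t).hasFDerivAt.fderiv]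

end Leibniz

section Poincare

variable {a b k : ℝ} {f f' w : ℝ → ℝ}

-- `(w f²)' = f'² - q f² - (f' - w f)²` whenever `w' = -(w² + q)`.
theorem integral_sq_le_integral_deriv_sq_of_riccati {q : ℝ} (hab : a ≤ b)
    (hf : ∀ x ∈ Set.Icc a b, HasDerivAt f (f' x) x) (hf' : ContinuousOn f' (Set.Icc a b))
    (hw : ∀ x ∈ Set.Icc a b, HasDerivAt w (-(w x ^ 2 + q)) x) (hfa : f a = 0) (hwb : w b = 0) :
    q * ∫ x in a..b, f x ^ 2 ≤ ∫ x in a..b, f' x ^ 2 := by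
  have hfc : ContinuousOn f (Set.Icc a b) := fun x hx => (hf x hx).continuousAt.continuousWithinAt
  have hwc : ContinuousOn w (Set.Icc a b) := fun x hx => (hw x hx).continuousAt.continuousWithinAt
  rw [← Set.uIcc_of_le hab] at *
  have hsq : ∀ x ∈ Set.uIcc a b, HasDerivAt (fun t => w t * f t ^ 2)
      (f' x ^ 2 - q * f x ^ 2 - (f' x - w x * f x) ^ 2) x := fun x hx =>
    ((hw x hx).fun_mul ((hf x hx).fun_pow 2)).congr_deriv (by push_cast; ring)
  have hdefect : IntervalIntegrable (fun x => (f' x - w x * f x) ^ 2) volume a b :=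
    ContinuousOn.intervalIntegrable (by fun_prop)
  have hf'sq : IntervalIntegrable (fun x => f' x ^ 2) volume a b :=
    ContinuousOn.intervalIntegrable (by fun_prop)
  have hfsq : IntervalIntegrable (fun x => q * f x ^ 2) volume a b :=
    ContinuousOn.intervalIntegrable (by fun_prop)
  have htotal := intervalIntegral.integral_eq_sub_of_hasDerivAt hsq
    ((hf'sq.sub hfsq).sub hdefect)
  rw [intervalIntegral.integral_sub (hf'sq.sub hfsq) hdefect,
    intervalIntegral.integral_sub hf'sq hfsq, intervalIntegral.integral_const_mul, hfa, hwb]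
    at htotal
  have hdefect_nonneg : 0 ≤ ∫ x in a..b, (f' x - w x * f x) ^ 2 :=
    intervalIntegral.integral_nonneg hab fun x _ => sq_nonneg _
  linarith

theorem hasDerivAt_mul_tan_mul_sub {x : ℝ} (h : cos (k * (b - x)) ≠ 0) :
    HasDerivAt (fun t => k * tan (k * (b - t))) (-((k * tan (k * (b - x))) ^ 2 + k ^ 2)) x := by
  have hlin : HasDerivAt (fun t => k * (b - t)) (-k) x := by
    simpa using ((hasDerivAt_id x).const_sub b).const_mul k
  refine (((hasDerivAt_tan h).comp x hlin).const_mul k).congr_deriv ?_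
  rw [one_div, ← inv_one_add_tan_sq h, inv_inv]
  ring

-- At the optimal `k = π / (2 (b - a))` the Riccati solution `k tan (k (b - x))` blows up at `a`, so
-- the inequality is proved for smaller `k` and passed to the limit.
theorem poincare_inequality_of_left_zero (hab : a < b)
    (hf : ∀ x ∈ Set.Icc a b, HasDerivAt f (f' x) x) (hf' : ContinuousOn f' (Set.Icc a b))
    (hfa : f a = 0) :
    (π / (2 * (b - a))) ^ 2 * ∫ x in a..b, f x ^ 2 ≤ ∫ x in a..b, f' x ^ 2 := by
  have hsub : ∀ k ∈ Set.Ioo 0 (π / (2 * (b - a))),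
      k ^ 2 * ∫ x in a..b, f x ^ 2 ≤ ∫ x in a..b, f' x ^ 2 := by
    rintro k ⟨hk0, hk⟩
    have hkb : k * (b - a) < π / 2 := by
      rw [lt_div_iff₀ (by positivity)] at hk
      linarith
    refine integral_sq_le_integral_deriv_sq_of_riccati hab.le hf hf'
      (w := fun t => k * tan (k * (b - t))) (fun x hx => hasDerivAt_mul_tan_mul_sub ?_) hfa
      (by simp)
    have h0 : 0 ≤ k * (b - x) := mul_nonneg hk0.le (sub_nonneg.2 hx.2)
    have h1 : k * (b - x) ≤ k * (b - a) := by gcongr; exact hx.1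
    exact (cos_pos_of_mem_Ioo ⟨by linarith [pi_pos], by linarith⟩).ne'
  have hlim : Filter.Tendsto (fun k : ℝ => k ^ 2 * ∫ x in a..b, f x ^ 2)
      (nhdsWithin (π / (2 * (b - a))) (Set.Iio (π / (2 * (b - a)))))
      (nhds ((π / (2 * (b - a))) ^ 2 * ∫ x in a..b, f x ^ 2)) :=
    (by fun_prop : Continuous fun k : ℝ => k ^ 2 * ∫ x in a..b, f x ^ 2).continuousWithinAt
  exact le_of_tendsto hlim <|
    Filter.eventually_of_mem (Ioo_mem_nhdsLT (by positivity)) hsub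

theorem weighted_poincare_inequality_sub_left {κ : ℝ} {p : ℝ → ℝ} (hab : a < b) (hκ : 0 ≤ κ)
    (hp : ContinuousOn p (Set.Icc a b)) (hκp : ∀ x ∈ Set.Icc a b, κ ≤ p x)
    (hf : ∀ x ∈ Set.Icc a b, HasDerivAt f (f' x) x) (hf' : ContinuousOn f' (Set.Icc a b)) :
    κ * (π / (2 * (b - a))) ^ 2 * ∫ x in a..b, (f x - f a) ^ 2 ≤ ∫ x in a..b, p x * f' x ^ 2 := by
  have hpoincare := poincare_inequality_of_left_zero hab
    (fun x hx => (hf x hx).sub_const (f a)) hf' (sub_self _)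
  rw [← Set.uIcc_of_le hab.le] at hp hf'
  calc κ * (π / (2 * (b - a))) ^ 2 * ∫ x in a..b, (f x - f a) ^ 2
      ≤ κ * ∫ x in a..b, f' x ^ 2 := by
        rw [mul_assoc]
        gcongr
    _ = ∫ x in a..b, κ * f' x ^ 2 := (intervalIntegral.integral_const_mul _ _).symm
    _ ≤ ∫ x in a..b, p x * f' x ^ 2 :=
        intervalIntegral.integral_mono_on hab.le
          (ContinuousOn.intervalIntegrable (by fun_prop))
          (ContinuousOn.intervalIntegrable (by fun_prop))
          fun x hx => mul_le_mul_of_nonneg_right (hκp x hx) (sq_nonneg _)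

end Poincare

section SemisepOp

/-- The operator `T` on functions of one variable, applied to the kernel `K` in its first
variable; `actFst deriv K` is the partial derivative `∂K/∂x`. -/
def actFst (T : (ℝ → ℝ) → ℝ → ℝ) (K : ℝ → ℝ → ℝ) (x ξ : ℝ) : ℝ := T (K · ξ) x

theorem hasDerivAt_actFst_deriv {K : ℝ → ℝ → ℝ} (hK : ContDiff ℝ 1 (uncurry K)) (x ξ : ℝ) :
    HasDerivAt (K · ξ) (actFst deriv K x ξ) x :=
  ((hK.comp (contDiff_prodMk_left ξ)).differentiable_one x).hasDerivAt

theorem contDiff_actFst_deriv {n m : WithTop ℕ∞} {K : ℝ → ℝ → ℝ}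
    (hK : ContDiff ℝ n (uncurry K)) (hmn : m + 1 ≤ n) :
    ContDiff ℝ m (uncurry (actFst deriv K)) := by
  have hfderiv : uncurry (actFst deriv K) = fun z => fderiv ℝ (uncurry K) z (1, 0) := by
    ext ⟨x, ξ⟩
    have hK' : HasFDerivAt (uncurry K) (fderiv ℝ (uncurry K) (x, ξ)) (x, ξ) :=
      ((hK.of_le (le_add_self.trans hmn)).differentiable_one _).hasFDerivAt
    exact (hK'.comp_hasDerivAt x ((hasDerivAt_id x).prodMk (hasDerivAt_const x ξ))).deriv
  rw [hfderiv]
  exact (hK.fderiv_right hmn).clm_apply contDiff_const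

variable {N M v w : ℝ → ℝ} {K K₁ K₂ L₁ L₂ : ℝ → ℝ → ℝ}

theorem contDiff_uncurry_swap {n : WithTop ℕ∞} (hK : ContDiff ℝ n (uncurry K)) :
    ContDiff ℝ n (uncurry (swap K)) :=
  hK.comp (contDiff_snd.prodMk contDiff_fst)

theorem continuous_uncurry_swap (hK : Continuous (uncurry K)) : Continuous (uncurry (swap K)) :=
  hK.comp continuous_swap

theorem semisepOp_apply_zero :
    semisepOp N K₁ K₂ w 0 = N 0 * w 0 + ∫ ξ in (0:ℝ)..1, K₂ 0 ξ * w ξ := by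
  simp [semisepOp]

theorem semisepOp_apply_one :
    semisepOp N K₁ K₂ w 1 = N 1 * w 1 + ∫ ξ in (0:ℝ)..1, K₁ 1 ξ * w ξ := by
  simp [semisepOp]

theorem mul_semisepOp (f : ℝ → ℝ) (x : ℝ) :
    f x * semisepOp N K₁ K₂ w x =
      semisepOp (fun x => f x * N x) (fun x ξ => f x * K₁ x ξ) (fun x ξ => f x * K₂ x ξ) w x := by
  simp only [semisepOp, mul_assoc, intervalIntegral.integral_const_mul]
  ring

theorem semisepOp_add (hK₁ : Continuous (uncurry K₁)) (hK₂ : Continuous (uncurry K₂))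
    (hL₁ : Continuous (uncurry L₁)) (hL₂ : Continuous (uncurry L₂)) (hw : Continuous w) (x : ℝ) :
    semisepOp (fun x => N x + M x) (fun x ξ => K₁ x ξ + L₁ x ξ) (fun x ξ => K₂ x ξ + L₂ x ξ) w x =
      semisepOp N K₁ K₂ w x + semisepOp M L₁ L₂ w x := by
  have hint {K : ℝ → ℝ → ℝ} (hK : Continuous (uncurry K)) (y z : ℝ) :
      IntervalIntegrable (fun ξ => K x ξ * w ξ) volume y z :=
    ((hK.uncurry_left x).mul hw).intervalIntegrable y z
  simp only [semisepOp, add_mul]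
  rw [intervalIntegral.integral_add (hint hK₁ _ _) (hint hL₁ _ _),
    intervalIntegral.integral_add (hint hK₂ _ _) (hint hL₂ _ _)]
  ring

theorem continuous_integral_zero_kernel (hK : Continuous (uncurry K)) (hw : Continuous w) :
    Continuous fun x => ∫ ξ in (0:ℝ)..x, K x ξ * w ξ := by
  fun_prop

theorem continuous_integral_kernel_one (hK : Continuous (uncurry K)) (hw : Continuous w) :
    Continuous fun x => ∫ ξ in x..(1:ℝ), K x ξ * w ξ := by
  simp only [intervalIntegral.integral_symm 1]
  fun_prop

theorem continuous_semisepOp (hN : Continuous N) (hK₁ : Continuous (uncurry K₁))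
    (hK₂ : Continuous (uncurry K₂)) (hw : Continuous w) : Continuous (semisepOp N K₁ K₂ w) :=
  ((hN.mul hw).add (continuous_integral_zero_kernel hK₁ hw)).add
    (continuous_integral_kernel_one hK₂ hw)

theorem integral_mul_integral_kernel_swap (hK : Continuous (uncurry K)) (hv : Continuous v)
    (hw : Continuous w) :
    ∫ x in (0:ℝ)..1, v x * ∫ ξ in (0:ℝ)..x, K x ξ * w ξ =
      ∫ x in (0:ℝ)..1, w x * ∫ ξ in x..(1:ℝ), swap K x ξ * v ξ := by
  simp only [← intervalIntegral.integral_const_mul]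
  rw [integral_integral_triangle_swap (by fun_prop)]
  simp only [swap, mul_left_comm, mul_comm]

theorem integral_mul_semisepOp_eq_add (hN : Continuous N) (hK₁ : Continuous (uncurry K₁))
    (hK₂ : Continuous (uncurry K₂)) (hv : Continuous v) (hw : Continuous w) :
    ∫ x in (0:ℝ)..1, v x * semisepOp N K₁ K₂ w x =
      (∫ x in (0:ℝ)..1, v x * (N x * w x))
        + (∫ x in (0:ℝ)..1, v x * ∫ ξ in (0:ℝ)..x, K₁ x ξ * w ξ)
        + ∫ x in (0:ℝ)..1, v x * ∫ ξ in x..(1:ℝ), K₂ x ξ * w ξ := by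
  have hupper := continuous_integral_kernel_one hK₂ hw
  rw [← intervalIntegral.integral_add, ← intervalIntegral.integral_add]
  · simp only [semisepOp, mul_add]
  all_goals exact Continuous.intervalIntegrable (by fun_prop) _ _

theorem integral_mul_semisepOp_adjoint (hN : Continuous N) (hK₁ : Continuous (uncurry K₁))
    (hK₂ : Continuous (uncurry K₂)) (hv : Continuous v) (hw : Continuous w) :
    ∫ x in (0:ℝ)..1, v x * semisepOp N K₁ K₂ w x =
      ∫ x in (0:ℝ)..1, w x * semisepOp N (swap K₂) (swap K₁) v x := by
  have hK₁s := continuous_uncurry_swap hK₁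
  have hK₂s := continuous_uncurry_swap hK₂
  have hlower := integral_mul_integral_kernel_swap hK₁ hv hw
  have hupper : ∫ x in (0:ℝ)..1, w x * ∫ ξ in (0:ℝ)..x, swap K₂ x ξ * v ξ =
      ∫ x in (0:ℝ)..1, v x * ∫ ξ in x..(1:ℝ), K₂ x ξ * w ξ :=
    integral_mul_integral_kernel_swap hK₂s hw hv
  have hmul : ∫ x in (0:ℝ)..1, v x * (N x * w x) = ∫ x in (0:ℝ)..1, w x * (N x * v x) := by
    simp only [mul_comm, mul_left_comm]
  rw [integral_mul_semisepOp_eq_add hN hK₁ hK₂ hv hw,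
    integral_mul_semisepOp_eq_add hN hK₂s hK₁s hw hv, hlower, hupper, hmul, add_right_comm]

theorem two_mul_integral_mul_semisepOp_self (hN : Continuous N) (hK₁ : Continuous (uncurry K₁))
    (hK₂ : Continuous (uncurry K₂)) (hw : Continuous w) :
    2 * ∫ x in (0:ℝ)..1, w x * semisepOp N K₁ K₂ w x =
      ∫ x in (0:ℝ)..1, w x * semisepOp (fun x => 2 * N x) (fun x ξ => K₁ x ξ + K₂ ξ x)
        (fun x ξ => K₁ ξ x + K₂ x ξ) w x := by
  have hK₁s := continuous_uncurry_swap hK₁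
  have hK₂s := continuous_uncurry_swap hK₂
  have hS := continuous_semisepOp hN hK₁ hK₂ hw
  have hSadj := continuous_semisepOp hN hK₂s hK₁s hw
  rw [two_mul]
  nth_rw 2 [integral_mul_semisepOp_adjoint hN hK₁ hK₂ hw hw]
  rw [← intervalIntegral.integral_add (Continuous.intervalIntegrable (by fun_prop) 0 1)
    (Continuous.intervalIntegrable (by fun_prop) 0 1)]
  congr with x
  rw [← mul_add, ← semisepOp_add hK₁ hK₂ hK₂s hK₁s hw]
  simp only [two_mul, swap, add_comm]

theorem integral_mul_semisepOp_add_multiplier (hN : Continuous N) (hM : Continuous M)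
    (hK₁ : Continuous (uncurry K₁)) (hK₂ : Continuous (uncurry K₂)) (hv : Continuous v)
    (hw : Continuous w) :
    ∫ x in (0:ℝ)..1, v x * semisepOp (fun x => N x + M x) K₁ K₂ w x =
      (∫ x in (0:ℝ)..1, v x * (N x * w x)) + ∫ x in (0:ℝ)..1, v x * semisepOp M K₁ K₂ w x := by
  have hS := continuous_semisepOp hM hK₁ hK₂ hw
  rw [← intervalIntegral.integral_add (Continuous.intervalIntegrable (by fun_prop) 0 1)
    (Continuous.intervalIntegrable (by fun_prop) 0 1)]
  congr with x
  simp only [semisepOp]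
  ring

theorem integral_mul_semisepOp_const_add_multiplier (hM : Continuous M)
    (hK₁ : Continuous (uncurry K₁)) (hK₂ : Continuous (uncurry K₂)) (hw : Continuous w) (k : ℝ) :
    ∫ x in (0:ℝ)..1, w x * semisepOp (fun x => k + M x) K₁ K₂ w x =
      k * (∫ x in (0:ℝ)..1, w x ^ 2) + ∫ x in (0:ℝ)..1, w x * semisepOp M K₁ K₂ w x := by
  rw [integral_mul_semisepOp_add_multiplier continuous_const hM hK₁ hK₂ hw hw]
  simp only [← intervalIntegral.integral_const_mul, pow_two, mul_left_comm]

theorem hasDerivAt_semisepOp_zero (hK₁ : ContDiff ℝ 1 (uncurry K₁))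
    (hK₂ : ContDiff ℝ 1 (uncurry K₂)) (hw : Continuous w) (x : ℝ) :
    HasDerivAt (semisepOp 0 K₁ K₂ w)
      (semisepOp (fun x => K₁ x x - K₂ x x) (actFst deriv K₁) (actFst deriv K₂) w x) x := by
  have hleibniz {K : ℝ → ℝ → ℝ} (hK : ContDiff ℝ 1 (uncurry K)) (z : ℝ) :
      HasDerivAt (fun t => ∫ ξ in z..t, K t ξ * w ξ)
        (K x x * w x + ∫ ξ in z..x, actFst deriv K x ξ * w ξ) x := by
    have hKc := hK.continuous
    have hK'c := (contDiff_actFst_deriv (m := 0) hK (zero_add 1).le).continuous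
    exact hasDerivAt_intervalIntegral_param_right (F := fun t ξ => K t ξ * w ξ)
      (F' := fun t ξ => actFst deriv K t ξ * w ξ) (by fun_prop) (by fun_prop)
      (fun t ξ => (hasDerivAt_actFst_deriv hK t ξ).mul_const (w ξ)) z x
  have heq : semisepOp 0 K₁ K₂ w =
      fun t => (∫ ξ in (0:ℝ)..t, K₁ t ξ * w ξ) - ∫ ξ in (1:ℝ)..t, K₂ t ξ * w ξ := by
    ext t
    simp only [semisepOp, intervalIntegral.integral_symm 1 t, Pi.zero_apply]
    ring
  rw [heq]
  refine ((hleibniz hK₁ 0).fun_sub (hleibniz hK₂ 1)).congr_deriv ?_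
  simp only [semisepOp, intervalIntegral.integral_symm 1 x]
  ring

theorem deriv_semisepOp_zero (hK₁ : ContDiff ℝ 1 (uncurry K₁)) (hK₂ : ContDiff ℝ 1 (uncurry K₂))
    (hw : Continuous w) : deriv (semisepOp 0 K₁ K₂ w) =
      semisepOp (fun x => K₁ x x - K₂ x x) (actFst deriv K₁) (actFst deriv K₂) w :=
  funext fun x => (hasDerivAt_semisepOp_zero hK₁ hK₂ hw x).deriv

theorem deriv_semisepOp_zero_of_diagonal (hK₁ : ContDiff ℝ 1 (uncurry K₁))
    (hK₂ : ContDiff ℝ 1 (uncurry K₂)) (hw : Continuous w) (hdiag : ∀ x, K₁ x x = K₂ x x) :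
    deriv (semisepOp 0 K₁ K₂ w) = semisepOp 0 (actFst deriv K₁) (actFst deriv K₂) w := by
  rw [deriv_semisepOp_zero hK₁ hK₂ hw]
  congr 1
  exact funext fun x => sub_eq_zero.2 (hdiag x)

theorem contDiff_one_semisepOp_zero (hK₁ : ContDiff ℝ 1 (uncurry K₁))
    (hK₂ : ContDiff ℝ 1 (uncurry K₂)) (hw : Continuous w) :
    ContDiff ℝ 1 (semisepOp 0 K₁ K₂ w) := by
  have h₁ := hK₁.continuous
  have h₂ := hK₂.continuous
  refine contDiff_one_iff_deriv.2
    ⟨fun x => (hasDerivAt_semisepOp_zero hK₁ hK₂ hw x).differentiableAt, ?_⟩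
  rw [deriv_semisepOp_zero hK₁ hK₂ hw]
  exact continuous_semisepOp (by fun_prop)
    (contDiff_actFst_deriv (m := 0) hK₁ (zero_add 1).le).continuous
    (contDiff_actFst_deriv (m := 0) hK₂ (zero_add 1).le).continuous hw

theorem contDiff_two_semisepOp_zero (hK₁ : ContDiff ℝ 2 (uncurry K₁))
    (hK₂ : ContDiff ℝ 2 (uncurry K₂)) (hw : Continuous w) (hdiag : ∀ x, K₁ x x = K₂ x x) :
    ContDiff ℝ 2 (semisepOp 0 K₁ K₂ w) := by
  have h₁ := hK₁.of_le one_le_two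
  have h₂ := hK₂.of_le one_le_two
  rw [← one_add_one_eq_two, contDiff_succ_iff_deriv,
    deriv_semisepOp_zero_of_diagonal h₁ h₂ hw hdiag]
  exact ⟨(contDiff_one_semisepOp_zero h₁ h₂ hw).differentiable_one, by simp,
    contDiff_one_semisepOp_zero (contDiff_actFst_deriv hK₁ one_add_one_eq_two.le)
      (contDiff_actFst_deriv hK₂ one_add_one_eq_two.le) hw⟩

end SemisepOp

section Green

/-- The second-order differential expression `v ↦ a v'' + b v' + c v`. -/
def diffOp (a b c v : ℝ → ℝ) (x : ℝ) : ℝ :=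
  a x * iteratedDeriv 2 v x + b x * deriv v x + c x * v x

/-- The flux `(a w)' - b w` whose derivative is the principal part of `adjointDiffOp`. -/
def flux (a b w : ℝ → ℝ) (x : ℝ) : ℝ := deriv (fun s => a s * w s) x - b x * w x

/-- The formal adjoint `w ↦ ((a w)' - b w)' + c w` of `diffOp a b c`. -/
def adjointDiffOp (a b c w : ℝ → ℝ) (x : ℝ) : ℝ := deriv (flux a b w) x + c x * w x

/-- The bilinear concomitant of `diffOp a b c`: the boundary expression in Green's formula. -/
def bilinearConcomitant (a b v w : ℝ → ℝ) (x : ℝ) : ℝ :=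
  a x * w x * deriv v x - flux a b w x * v x

variable {a b c v w : ℝ → ℝ} {K K₁ K₂ : ℝ → ℝ → ℝ}

theorem flux_eq {x : ℝ} (ha : DifferentiableAt ℝ a x) (hw : DifferentiableAt ℝ w x) :
    flux a b w x = (deriv a x - b x) * w x + a x * deriv w x := by
  rw [flux, deriv_fun_mul ha hw]
  ring

theorem actFst_flux_eq (ha : Differentiable ℝ a) (hK : ContDiff ℝ 1 (uncurry K)) (x ξ : ℝ) :
    actFst (flux a b) K x ξ = (deriv a x - b x) * K x ξ + a x * deriv (K · ξ) x :=
  flux_eq (ha x) (hasDerivAt_actFst_deriv hK x ξ).differentiableAt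

theorem deriv_mul_sub_eq_flux_sub_flux {x : ℝ} (ha : DifferentiableAt ℝ a x)
    (hv : DifferentiableAt ℝ v x) (hw : DifferentiableAt ℝ w x) (hvw : v x = w x) :
    deriv (fun t => a t * (v t - w t)) x = flux a b v x - flux a b w x := by
  rw [deriv_fun_mul ha (hv.fun_sub hw), deriv_fun_sub hv hw, flux_eq ha hv, flux_eq ha hw, hvw]
  ring

theorem contDiff_flux (ha : ContDiff ℝ 2 a) (hb : ContDiff ℝ 1 b) (hw : ContDiff ℝ 2 w) :
    ContDiff ℝ 1 (flux a b w) :=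
  ((ha.mul hw).deriv' (n := 1)).sub (hb.mul (hw.of_le one_le_two))

theorem continuous_diffOp (ha : Continuous a) (hb : Continuous b) (hc : Continuous c)
    (hv : ContDiff ℝ 2 v) : Continuous (diffOp a b c v) :=
  ((ha.mul (hv.continuous_iteratedDeriv' 2)).add (hb.mul (hv.continuous_deriv one_le_two))).add
    (hc.mul hv.continuous)

theorem continuous_adjointDiffOp (ha : ContDiff ℝ 2 a) (hb : ContDiff ℝ 1 b) (hc : Continuous c)
    (hw : ContDiff ℝ 2 w) : Continuous (adjointDiffOp a b c w) :=
  (contDiff_flux ha hb hw).continuous_deriv_one.add (hc.mul hw.continuous)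

theorem hasDerivAt_bilinearConcomitant (c : ℝ → ℝ) (ha : ContDiff ℝ 2 a) (hb : ContDiff ℝ 1 b)
    (hv : ContDiff ℝ 2 v) (hw : ContDiff ℝ 2 w) (x : ℝ) :
    HasDerivAt (bilinearConcomitant a b v w)
      (diffOp a b c v x * w x - v x * adjointDiffOp a b c w x) x := by
  have haw : HasDerivAt (fun s => a s * w s) (deriv (fun s => a s * w s) x) x :=
    ((ha.mul hw).differentiable two_ne_zero x).hasDerivAt
  have hv' : HasDerivAt (deriv v) (iteratedDeriv 2 v x) x := by
    rw [iteratedDeriv_succ, iteratedDeriv_one]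
    exact ((hv.deriv' (n := 1)).differentiable_one x).hasDerivAt
  have hfluxv := ((contDiff_flux ha hb hw).differentiable_one x).hasDerivAt.mul
    (hv.differentiable two_ne_zero x).hasDerivAt
  refine ((haw.mul hv').sub hfluxv).congr_deriv ?_
  simp only [diffOp, adjointDiffOp, flux]
  ring

theorem integral_diffOp_mul (ha : ContDiff ℝ 2 a) (hb : ContDiff ℝ 1 b) (hc : Continuous c)
    (hv : ContDiff ℝ 2 v) (hw : ContDiff ℝ 2 w) (x y : ℝ) :
    ∫ t in x..y, diffOp a b c v t * w t = (∫ t in x..y, v t * adjointDiffOp a b c w t)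
      + (bilinearConcomitant a b v w y - bilinearConcomitant a b v w x) := by
  have hAvw : Continuous fun t => diffOp a b c v t * w t :=
    (continuous_diffOp ha.continuous hb.continuous hc hv).mul hw.continuous
  have hvAw : Continuous fun t => v t * adjointDiffOp a b c w t :=
    hv.continuous.mul (continuous_adjointDiffOp ha hb hc hw)
  rw [← intervalIntegral.integral_eq_sub_of_hasDerivAt
    (fun t _ => hasDerivAt_bilinearConcomitant c ha hb hv hw t)
    ((hAvw.sub hvAw).intervalIntegrable x y), intervalIntegral.integral_sub
    (hAvw.intervalIntegrable x y) (hvAw.intervalIntegrable x y)]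
  ring

theorem diffOp_sq (hv : ContDiff ℝ 2 v) (x : ℝ) :
    diffOp a b c (fun t => v t ^ 2) x =
      2 * v x * diffOp a b c v x - c x * v x ^ 2 + 2 * a x * deriv v x ^ 2 := by
  have hd : Differentiable ℝ v := hv.differentiable two_ne_zero
  have hd' : Differentiable ℝ (deriv v) := (hv.deriv' (n := 1)).differentiable_one
  have hsq : deriv (fun t => v t ^ 2) = fun t => 2 * v t * deriv v t := by
    ext t
    simp [deriv_fun_pow (hd t) 2]
  have hsq' : deriv (fun t => 2 * v t * deriv v t) x =
      2 * deriv v x * deriv v x + 2 * v x * deriv (deriv v) x := by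
    rw [deriv_fun_mul (by fun_prop) (hd' x), deriv_const_mul _ (hd x)]
  simp only [diffOp, iteratedDeriv_succ, iteratedDeriv_zero, hsq, hsq']
  ring

theorem flux_semisepOp_zero (ha : ContDiff ℝ 1 a) (hb : Continuous b)
    (hK₁ : ContDiff ℝ 1 (uncurry K₁)) (hK₂ : ContDiff ℝ 1 (uncurry K₂)) (hw : Continuous w)
    (hdiag : ∀ x, K₁ x x = K₂ x x) :
    flux a b (semisepOp 0 K₁ K₂ w) =
      semisepOp 0 (actFst (flux a b) K₁) (actFst (flux a b) K₂) w := by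
  have haK {K : ℝ → ℝ → ℝ} (hK : ContDiff ℝ 1 (uncurry K)) :
      ContDiff ℝ 1 (uncurry fun x ξ => a x * K x ξ) := (ha.comp contDiff_fst).mul hK
  have haK' {K : ℝ → ℝ → ℝ} (hK : ContDiff ℝ 1 (uncurry K)) :
      Continuous (uncurry (actFst deriv fun x ξ => a x * K x ξ)) :=
    (contDiff_actFst_deriv (m := 0) (haK hK) (zero_add 1).le).continuous
  have hbK {K : ℝ → ℝ → ℝ} (hK : ContDiff ℝ 1 (uncurry K)) :
      Continuous (uncurry fun x ξ => -b x * K x ξ) := (hb.comp continuous_fst).neg.mul hK.continuous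
  have hau : (fun x => a x * semisepOp 0 K₁ K₂ w x) =
      semisepOp 0 (fun x ξ => a x * K₁ x ξ) (fun x ξ => a x * K₂ x ξ) w := by
    ext x
    rw [mul_semisepOp]
    simp [semisepOp]
  ext x
  rw [flux, hau, deriv_semisepOp_zero_of_diagonal (haK hK₁) (haK hK₂) hw (by simp [hdiag]),
    sub_eq_add_neg, ← neg_mul, mul_semisepOp (fun x => -b x),
    ← semisepOp_add (haK' hK₁) (haK' hK₂) (hbK hK₁) (hbK hK₂) hw]
  simp [semisepOp, actFst, flux, sub_eq_add_neg]

theorem contDiff_actFst_flux (ha : ContDiff ℝ 2 a) (hb : ContDiff ℝ 1 b)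
    (hK : ContDiff ℝ 2 (uncurry K)) : ContDiff ℝ 1 (uncurry (actFst (flux a b) K)) := by
  have haK : ContDiff ℝ 2 (uncurry fun x ξ => a x * K x ξ) := (ha.comp contDiff_fst).mul hK
  exact (contDiff_actFst_deriv haK one_add_one_eq_two.le).sub
    ((hb.comp contDiff_fst).mul (hK.of_le one_le_two))

theorem continuous_actFst_adjointDiffOp (ha : ContDiff ℝ 2 a) (hb : ContDiff ℝ 1 b)
    (hc : Continuous c) (hK : ContDiff ℝ 2 (uncurry K)) :
    Continuous (uncurry (actFst (adjointDiffOp a b c) K)) :=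
  (contDiff_actFst_deriv (m := 0) (contDiff_actFst_flux ha hb hK) (zero_add 1).le).continuous.add
    ((hc.comp continuous_fst).mul hK.continuous)

theorem adjointDiffOp_semisepOp_zero (ha : ContDiff ℝ 2 a) (hb : ContDiff ℝ 1 b)
    (hc : Continuous c) (hK₁ : ContDiff ℝ 2 (uncurry K₁)) (hK₂ : ContDiff ℝ 2 (uncurry K₂))
    (hw : Continuous w) (hdiag : ∀ x, K₁ x x = K₂ x x) :
    adjointDiffOp a b c (semisepOp 0 K₁ K₂ w) =
      semisepOp (fun x => actFst (flux a b) K₁ x x - actFst (flux a b) K₂ x x)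
        (actFst (adjointDiffOp a b c) K₁) (actFst (adjointDiffOp a b c) K₂) w := by
  have hflux' {K : ℝ → ℝ → ℝ} (hK : ContDiff ℝ 2 (uncurry K)) :
      Continuous (uncurry (actFst deriv (actFst (flux a b) K))) :=
    (contDiff_actFst_deriv (m := 0) (contDiff_actFst_flux ha hb hK) (zero_add 1).le).continuous
  have hcK {K : ℝ → ℝ → ℝ} (hK : ContDiff ℝ 2 (uncurry K)) :
      Continuous (uncurry fun x ξ => c x * K x ξ) := (hc.comp continuous_fst).mul hK.continuous
  ext x
  rw [adjointDiffOp, flux_semisepOp_zero (ha.of_le one_le_two) hb.continuous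
      (hK₁.of_le one_le_two) (hK₂.of_le one_le_two) hw hdiag,
    deriv_semisepOp_zero (contDiff_actFst_flux ha hb hK₁) (contDiff_actFst_flux ha hb hK₂) hw,
    mul_semisepOp, ← semisepOp_add (hflux' hK₁) (hflux' hK₂) (hcK hK₁) (hcK hK₂) hw]
  simp [semisepOp, actFst, adjointDiffOp]

end Green

section Lyapunov

/-- The multiplier of the Lyapunov operator `A*S + SA`, where `A = diffOp a b c` and
`S = semisepOp N K₁ K₂`; the last term is the jump of the flux of the kernels across the
diagonal. -/
def lyapunovMultiplier (a b c N : ℝ → ℝ) (K₁ K₂ : ℝ → ℝ → ℝ) (x : ℝ) : ℝ :=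
  adjointDiffOp a b c N x + c x * N x
    + 2 * (actFst (flux a b) K₁ x x - actFst (flux a b) K₂ x x)

/-- The kernel below the diagonal of the Lyapunov operator `A*S + SA`, where `A = diffOp a b c`
and `S = semisepOp N K₁ K₂`. The kernel above the diagonal is its `swap`. -/
def lyapunovKernel (a b c : ℝ → ℝ) (K₁ K₂ : ℝ → ℝ → ℝ) (x ξ : ℝ) : ℝ :=
  actFst (adjointDiffOp a b c) K₁ x ξ + actFst (adjointDiffOp a b c) K₂ ξ x

/-- The boundary expression produced by integrating `2 ⟨A e, S e⟩` by parts, where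
`A = diffOp a b c` and `S = semisepOp N K₁ K₂`. -/
def lyapunovBoundary (a b N : ℝ → ℝ) (K₁ K₂ : ℝ → ℝ → ℝ) (e : ℝ → ℝ) (x : ℝ) : ℝ :=
  bilinearConcomitant a b (fun t => e t ^ 2) N x
    + 2 * bilinearConcomitant a b e (semisepOp 0 K₁ K₂ e) x

variable {a b c e N : ℝ → ℝ} {K₁ K₂ : ℝ → ℝ → ℝ}

theorem lyapunovMultiplier_eq (ha : Differentiable ℝ a) (hK₁ : ContDiff ℝ 1 (uncurry K₁))
    (hK₂ : ContDiff ℝ 1 (uncurry K₂)) (hdiag : ∀ x, K₁ x x = K₂ x x) (x : ℝ) :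
    lyapunovMultiplier a b c N K₁ K₂ x =
      deriv (fun t => deriv (fun s => a s * N s) t - b t * N t) x
        + 2 * deriv (fun t => a t * (K₁ t x - K₂ t x)) x + 2 * N x * c x := by
  rw [deriv_mul_sub_eq_flux_sub_flux (b := b) (ha x)
    (hasDerivAt_actFst_deriv hK₁ x x).differentiableAt
    (hasDerivAt_actFst_deriv hK₂ x x).differentiableAt (hdiag x)]
  change deriv (flux a b N) x + c x * N x + c x * N x + 2 * _ = deriv (flux a b N) x + 2 * _ + _
  simp only [actFst]
  ring

theorem lyapunovKernel_swap_eq (K : ℝ → ℝ → ℝ) (x ξ : ℝ) :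
    lyapunovKernel a b c K (swap K) x ξ =
      deriv (fun t => deriv (fun s => a s * K s ξ) t - b t * K t ξ) x
        + deriv (fun s => deriv (fun r => a r * K x r) s - b s * K x s) ξ
        + (c x + c ξ) * K x ξ := by
  change deriv (flux a b (K · ξ)) x + c x * K x ξ + (deriv (flux a b (K x)) ξ + c ξ * K x ξ) =
    deriv (flux a b (K · ξ)) x + deriv (flux a b (K x)) ξ + _
  ring

theorem continuous_lyapunovMultiplier (ha : ContDiff ℝ 2 a) (hb : ContDiff ℝ 1 b)
    (hc : Continuous c) (hN : ContDiff ℝ 2 N) (hK₁ : ContDiff ℝ 2 (uncurry K₁))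
    (hK₂ : ContDiff ℝ 2 (uncurry K₂)) : Continuous (lyapunovMultiplier a b c N K₁ K₂) := by
  have hF₁ := (contDiff_actFst_flux ha hb hK₁).continuous
  have hF₂ := (contDiff_actFst_flux ha hb hK₂).continuous
  have hAN := continuous_adjointDiffOp ha hb hc hN
  have hNc := hN.continuous
  unfold lyapunovMultiplier
  fun_prop

theorem continuous_lyapunovKernel (ha : ContDiff ℝ 2 a) (hb : ContDiff ℝ 1 b)
    (hc : Continuous c) (hK₁ : ContDiff ℝ 2 (uncurry K₁))
    (hK₂ : ContDiff ℝ 2 (uncurry K₂)) : Continuous (uncurry (lyapunovKernel a b c K₁ K₂)) :=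
  (continuous_actFst_adjointDiffOp ha hb hc hK₁).add
    ((continuous_actFst_adjointDiffOp ha hb hc hK₂).comp continuous_swap)

theorem two_mul_integral_diffOp_mul_mul_self (ha : ContDiff ℝ 2 a) (hb : ContDiff ℝ 1 b)
    (hc : Continuous c) (hN : ContDiff ℝ 2 N) (he : ContDiff ℝ 2 e) (x y : ℝ) :
    2 * ∫ t in x..y, diffOp a b c e t * (N t * e t) =
      (∫ t in x..y, (adjointDiffOp a b c N t + c t * N t) * e t ^ 2)
        - 2 * (∫ t in x..y, a t * N t * deriv e t ^ 2)
        + (bilinearConcomitant a b (fun t => e t ^ 2) N y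
          - bilinearConcomitant a b (fun t => e t ^ 2) N x) := by
  have hgreen := integral_diffOp_mul ha hb hc (he.pow 2) hN x y
  have hac := ha.continuous
  have hNc := hN.continuous
  have hec := he.continuous
  have he'c : Continuous (deriv e) := he.continuous_deriv one_le_two
  have hAe := continuous_diffOp hac hb.continuous hc he
  have hAN := continuous_adjointDiffOp ha hb hc hN
  simp only [diffOp_sq he] at hgreen
  have hint {f : ℝ → ℝ} (hf : Continuous f) : IntervalIntegrable f volume x y :=
    hf.intervalIntegrable x y
  have hsplit : ∫ t in x..y,
      (2 * e t * diffOp a b c e t - c t * e t ^ 2 + 2 * a t * deriv e t ^ 2) * N t =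
      2 * (∫ t in x..y, diffOp a b c e t * (N t * e t)) - (∫ t in x..y, c t * N t * e t ^ 2)
        + 2 * ∫ t in x..y, a t * N t * deriv e t ^ 2 := by
    rw [← intervalIntegral.integral_const_mul, ← intervalIntegral.integral_const_mul,
      ← intervalIntegral.integral_sub (hint (by fun_prop)) (hint (by fun_prop)),
      ← intervalIntegral.integral_add (hint (by fun_prop)) (hint (by fun_prop))]
    congr with t
    ring
  have hadjoint : ∫ t in x..y, (adjointDiffOp a b c N t + c t * N t) * e t ^ 2 =
      (∫ t in x..y, e t ^ 2 * adjointDiffOp a b c N t) + ∫ t in x..y, c t * N t * e t ^ 2 := by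
    rw [← intervalIntegral.integral_add (hint (by fun_prop)) (hint (by fun_prop))]
    congr with t
    ring
  linarith

theorem two_mul_integral_diffOp_mul_semisepOp_zero (ha : ContDiff ℝ 2 a) (hb : ContDiff ℝ 1 b)
    (hc : Continuous c) (hK₁ : ContDiff ℝ 2 (uncurry K₁)) (hK₂ : ContDiff ℝ 2 (uncurry K₂))
    (hdiag : ∀ x, K₁ x x = K₂ x x) (he : ContDiff ℝ 2 e) :
    2 * ∫ x in (0:ℝ)..1, diffOp a b c e x * semisepOp 0 K₁ K₂ e x =
      (∫ x in (0:ℝ)..1,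
        e x * semisepOp (fun x => 2 * (actFst (flux a b) K₁ x x - actFst (flux a b) K₂ x x))
          (lyapunovKernel a b c K₁ K₂) (swap (lyapunovKernel a b c K₁ K₂)) e x)
        + 2 * (bilinearConcomitant a b e (semisepOp 0 K₁ K₂ e) 1
          - bilinearConcomitant a b e (semisepOp 0 K₁ K₂ e) 0) := by
  have hF₁ := (contDiff_actFst_flux ha hb hK₁).continuous
  have hF₂ := (contDiff_actFst_flux ha hb hK₂).continuous
  rw [integral_diffOp_mul ha hb hc he
      (contDiff_two_semisepOp_zero hK₁ hK₂ he.continuous hdiag) 0 1,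
    adjointDiffOp_semisepOp_zero ha hb hc hK₁ hK₂ he.continuous hdiag, mul_add,
    two_mul_integral_mul_semisepOp_self (by fun_prop)
      (continuous_actFst_adjointDiffOp ha hb hc hK₁)
      (continuous_actFst_adjointDiffOp ha hb hc hK₂) he.continuous]
  rfl

theorem two_mul_integral_diffOp_mul_semisepOp (ha : ContDiff ℝ 2 a) (hb : ContDiff ℝ 1 b)
    (hc : Continuous c) (hN : ContDiff ℝ 2 N) (hK₁ : ContDiff ℝ 2 (uncurry K₁))
    (hK₂ : ContDiff ℝ 2 (uncurry K₂)) (hdiag : ∀ x, K₁ x x = K₂ x x) (he : ContDiff ℝ 2 e) :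
    2 * ∫ x in (0:ℝ)..1, diffOp a b c e x * semisepOp N K₁ K₂ e x =
      (∫ x in (0:ℝ)..1, e x * semisepOp (lyapunovMultiplier a b c N K₁ K₂)
          (lyapunovKernel a b c K₁ K₂) (swap (lyapunovKernel a b c K₁ K₂)) e x)
        - 2 * (∫ x in (0:ℝ)..1, a x * N x * deriv e x ^ 2)
        + (lyapunovBoundary a b N K₁ K₂ e 1 - lyapunovBoundary a b N K₁ K₂ e 0) := by
  have hF₁ := (contDiff_actFst_flux ha hb hK₁).continuous
  have hF₂ := (contDiff_actFst_flux ha hb hK₂).continuous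
  have hΛ := continuous_lyapunovKernel ha hb hc hK₁ hK₂
  have hsplit := integral_mul_semisepOp_add_multiplier hN.continuous continuous_zero
    hK₁.continuous hK₂.continuous (continuous_diffOp ha.continuous hb.continuous hc he)
    he.continuous
  simp only [Pi.zero_apply, add_zero] at hsplit
  have hmerge := integral_mul_semisepOp_add_multiplier
    (N := fun x => adjointDiffOp a b c N x + c x * N x)
    (M := fun x => 2 * (actFst (flux a b) K₁ x x - actFst (flux a b) K₂ x x))
    ((continuous_adjointDiffOp ha hb hc hN).add (hc.mul hN.continuous)) (by fun_prop)
    hΛ (continuous_uncurry_swap hΛ) he.continuous he.continuous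
  have hsq : ∫ x in (0:ℝ)..1, e x * ((adjointDiffOp a b c N x + c x * N x) * e x) =
      ∫ x in (0:ℝ)..1, (adjointDiffOp a b c N x + c x * N x) * e x ^ 2 := by
    simp only [pow_two, mul_left_comm]
  rw [hsplit, mul_add, two_mul_integral_diffOp_mul_mul_self ha hb hc hN he,
    two_mul_integral_diffOp_mul_semisepOp_zero ha hb hc hK₁ hK₂ hdiag he]
  unfold lyapunovMultiplier lyapunovBoundary
  rw [hmerge, hsq]
  ring

theorem bilinearConcomitant_sq {x : ℝ} (he : DifferentiableAt ℝ e x) :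
    bilinearConcomitant a b (fun t => e t ^ 2) N x =
      2 * a x * N x * e x * deriv e x - flux a b N x * e x ^ 2 := by
  simp only [bilinearConcomitant, deriv_fun_pow he 2]
  ring

theorem lyapunovBoundary_zero (ha : ContDiff ℝ 1 a) (hb : Continuous b)
    (hK₁ : ContDiff ℝ 1 (uncurry K₁)) (hK₂ : ContDiff ℝ 1 (uncurry K₂))
    (hdiag : ∀ x, K₁ x x = K₂ x x) (he : Differentiable ℝ e) (he0 : deriv e 0 = 0) :
    lyapunovBoundary a b N K₁ K₂ e 0 =
      -(flux a b N 0 * e 0 ^ 2 + 2 * e 0 * ∫ ξ in (0:ℝ)..1, actFst (flux a b) K₂ 0 ξ * e ξ) := by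
  rw [lyapunovBoundary, bilinearConcomitant_sq (he 0), bilinearConcomitant,
    flux_semisepOp_zero ha hb hK₁ hK₂ he.continuous hdiag, semisepOp_apply_zero,
    semisepOp_apply_zero, he0]
  simp only [Pi.zero_apply]
  ring

theorem lyapunovBoundary_one (ha : ContDiff ℝ 1 a) (hb : Continuous b)
    (hK₁ : ContDiff ℝ 1 (uncurry K₁)) (hK₂ : ContDiff ℝ 1 (uncurry K₂))
    (hdiag : ∀ x, K₁ x x = K₂ x x) (he : Differentiable ℝ e) :
    lyapunovBoundary a b N K₁ K₂ e 1 =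
      2 * a 1 * N 1 * e 1 * deriv e 1 - flux a b N 1 * e 1 ^ 2
        + 2 * (a 1 * (∫ ξ in (0:ℝ)..1, K₁ 1 ξ * e ξ) * deriv e 1
          - (∫ ξ in (0:ℝ)..1, actFst (flux a b) K₁ 1 ξ * e ξ) * e 1) := by
  rw [lyapunovBoundary, bilinearConcomitant_sq (he 1), bilinearConcomitant,
    flux_semisepOp_zero ha hb hK₁ hK₂ he.continuous hdiag, semisepOp_apply_one,
    semisepOp_apply_one]
  simp only [Pi.zero_apply, zero_mul, zero_add]

end Lyapunov

section Observer

variable {a b c e N O : ℝ → ℝ} {K K₁ K₂ : ℝ → ℝ → ℝ} {κ r : ℝ}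

theorem integral_sub_const_sq (he : Continuous e) (m x y : ℝ) :
    ∫ t in x..y, (e t - m) ^ 2 =
      (∫ t in x..y, e t ^ 2) - 2 * m * (∫ t in x..y, e t) + (y - x) * m ^ 2 := by
  rw [← smul_eq_mul (y - x), ← intervalIntegral.integral_const,
    ← intervalIntegral.integral_const_mul,
    ← intervalIntegral.integral_sub (Continuous.intervalIntegrable (by fun_prop) x y)
      (Continuous.intervalIntegrable (by fun_prop) x y),
    ← intervalIntegral.integral_add (Continuous.intervalIntegrable (by fun_prop) x y)
      (Continuous.intervalIntegrable (by fun_prop) x y)]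
  congr with t
  ring

theorem neg_two_mul_integral_sub_lyapunovBoundary_zero_le (ha : ContDiff ℝ 1 a)
    (hb : Continuous b) (hN : Continuous N) (hK₁ : ContDiff ℝ 1 (uncurry K₁))
    (hK₂ : ContDiff ℝ 1 (uncurry K₂)) (hdiag : ∀ x, K₁ x x = K₂ x x) (hκ : 0 ≤ κ)
    (hκaN : ∀ x ∈ Set.Icc 0 1, κ ≤ a x * N x) (hflux : flux a b N 0 ≤ π ^ 2 / 2 * κ)
    (hfluxK : ∀ ξ ∈ Set.Icc 0 1, actFst (flux a b) K₂ 0 ξ = -(π ^ 2 / 2 * κ))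
    (he : ContDiff ℝ 1 e) (he0 : deriv e 0 = 0) :
    -2 * (∫ x in (0:ℝ)..1, a x * N x * deriv e x ^ 2) - lyapunovBoundary a b N K₁ K₂ e 0 ≤
      -(π ^ 2 / 2 * κ) * ∫ x in (0:ℝ)..1, e x ^ 2 := by
  have hpoincare := weighted_poincare_inequality_sub_left zero_lt_one hκ
    (p := fun x => a x * N x) (ha.continuous.mul hN).continuousOn hκaN
    (fun x _ => (he.differentiable_one x).hasDerivAt) he.continuous_deriv_one.continuousOn
  rw [integral_sub_const_sq he.continuous] at hpoincare
  have hcross : ∫ ξ in (0:ℝ)..1, actFst (flux a b) K₂ 0 ξ * e ξ =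
      -(π ^ 2 / 2 * κ) * ∫ ξ in (0:ℝ)..1, e ξ := by
    rw [← intervalIntegral.integral_const_mul]
    refine intervalIntegral.integral_congr fun ξ hξ => ?_
    rw [Set.uIcc_of_le zero_le_one] at hξ
    simp only [hfluxK ξ hξ]
  rw [lyapunovBoundary_zero ha hb hK₁ hK₂ hdiag he.differentiable_one he0, hcross]
  linear_combination 2 * hpoincare + e 0 ^ 2 * hflux

theorem integral_injection_mul_semisepOp (ha : ContDiff ℝ 2 a) (hb : ContDiff ℝ 1 b)
    (hN : Continuous N) (hK : ContDiff ℝ 2 (uncurry K)) (hO : Continuous O)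
    (hSO : ∀ x ∈ Set.Icc 0 1,
      semisepOp N K (swap K) O x = r * actFst (flux a b) K 1 x - a 1 * K 1 x)
    (he : Continuous e) :
    ∫ x in (0:ℝ)..1, O x * semisepOp N K (swap K) e x =
      r * (∫ x in (0:ℝ)..1, actFst (flux a b) K 1 x * e x)
        - a 1 * ∫ x in (0:ℝ)..1, K 1 x * e x := by
  have hKc := hK.continuous
  have hFc := (contDiff_actFst_flux ha hb hK).continuous
  rw [integral_mul_semisepOp_adjoint hN hKc (continuous_uncurry_swap hKc) hO he,
    ← intervalIntegral.integral_const_mul, ← intervalIntegral.integral_const_mul,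
    ← intervalIntegral.integral_sub (Continuous.intervalIntegrable (by fun_prop) 0 1)
      (Continuous.intervalIntegrable (by fun_prop) 0 1)]
  refine intervalIntegral.integral_congr fun x hx => ?_
  rw [Set.uIcc_of_le zero_le_one] at hx
  change e x * semisepOp N K (swap K) O x = _
  rw [hSO x hx]
  ring

theorem two_mul_integral_diffOp_add_injection_mul_semisepOp_le (ha : ContDiff ℝ 2 a)
    (hb : ContDiff ℝ 1 b) (hc : Continuous c) (hN : ContDiff ℝ 2 N)
    (hK : ContDiff ℝ 2 (uncurry K)) (hκ : 0 ≤ κ)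
    (hκaN : ∀ x ∈ Set.Icc 0 1, κ ≤ a x * N x) (hflux : flux a b N 0 ≤ π ^ 2 / 2 * κ)
    (hfluxK : ∀ ξ ∈ Set.Icc 0 1, actFst (flux a b) (swap K) 0 ξ = -(π ^ 2 / 2 * κ))
    (hO : Continuous O) (hSO : ∀ x ∈ Set.Icc 0 1,
      semisepOp N K (swap K) O x = r * actFst (flux a b) K 1 x - a 1 * K 1 x)
    (he : ContDiff ℝ 2 e) (he0 : deriv e 0 = 0) (he1 : e 1 = r * deriv e 1) :
    2 * (∫ x in (0:ℝ)..1,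
        (diffOp a b c e x + O x * deriv e 1) * semisepOp N K (swap K) e x) ≤
      (∫ x in (0:ℝ)..1,
          semisepOp (fun x => -(π ^ 2 / 2 * κ) + lyapunovMultiplier a b c N K (swap K) x)
            (lyapunovKernel a b c K (swap K)) (swap (lyapunovKernel a b c K (swap K))) e x * e x)
        + (2 * a 1 * N 1 * e 1 * deriv e 1 - flux a b N 1 * e 1 ^ 2) := by
  have ha₁ := ha.of_le one_le_two
  have hK₁ := hK.of_le one_le_two
  have he₁ := he.of_le one_le_two
  have hKs := contDiff_uncurry_swap hK
  have hKs₁ := hKs.of_le one_le_two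
  have hAe := continuous_diffOp ha.continuous hb.continuous hc he
  have hSe := continuous_semisepOp hN.continuous hK.continuous hKs.continuous he.continuous
  have hΛ := continuous_lyapunovKernel ha hb hc hK hKs
  have henergy := two_mul_integral_diffOp_mul_semisepOp ha hb hc hN hK hKs (fun _ => rfl) he
  have hboundary_zero := neg_two_mul_integral_sub_lyapunovBoundary_zero_le ha₁ hb.continuous
    hN.continuous hK₁ hKs₁ (fun _ => rfl) hκ hκaN hflux hfluxK he₁ he0
  have hboundary_one := lyapunovBoundary_one (N := N) ha₁ hb.continuous hK₁ hKs₁ (fun _ => rfl)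
    he₁.differentiable_one
  have hinjection := integral_injection_mul_semisepOp ha hb hN.continuous hK hO hSO he.continuous
  have hsplit : ∫ x in (0:ℝ)..1,
      (diffOp a b c e x + O x * deriv e 1) * semisepOp N K (swap K) e x =
      (∫ x in (0:ℝ)..1, diffOp a b c e x * semisepOp N K (swap K) e x)
        + deriv e 1 * ∫ x in (0:ℝ)..1, O x * semisepOp N K (swap K) e x := by
    rw [← intervalIntegral.integral_const_mul,
      ← intervalIntegral.integral_add (Continuous.intervalIntegrable (by fun_prop) 0 1)
        (Continuous.intervalIntegrable (by fun_prop) 0 1)]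
    congr with x
    ring
  simp_rw [mul_comm _ (e _)]
  rw [hsplit, hinjection, integral_mul_semisepOp_const_add_multiplier
    (continuous_lyapunovMultiplier ha hb hc hN hK hKs) hΛ (continuous_uncurry_swap hΛ)
    he.continuous]
  rw [he1] at hboundary_one ⊢
  linear_combination henergy + hboundary_zero + hboundary_one

end Observer

theorem observer_synthesis_inequality_general
    (a b c : ℝ → ℝ) (α : ℝ) (hα : 0 ≤ α)
    (ha : ContDiff ℝ 2 a) (hb : ContDiff ℝ 1 b) (hc : Continuous c)
    (haα : ∀ x ∈ Set.Icc 0 1, α ≤ a x)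
    (ε1 : ℝ) (hε1 : 0 ≤ ε1)
    (N : ℝ → ℝ) (P1 P2 : ℝ → ℝ → ℝ)
    (hN : ContDiff ℝ 2 N) (hP1 : ContDiff ℝ 2 (uncurry P1))
    (hsym : ∀ x ξ : ℝ, P2 x ξ = P1 ξ x)
    (hNε : ∀ x ∈ Set.Icc 0 1, ε1 ≤ N x)
    (Q0 Q4 Q6 Q8 : ℝ → ℝ) (Q1 Q2 : ℝ → ℝ → ℝ) (Q3 Q5 Q7 : ℝ)
    (hQ0 : ∀ x : ℝ, Q0 x =
      deriv (fun t => deriv (fun s => a s * N s) t - b t * N t) x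
        + 2 * deriv (fun t => a t * (P1 t x - P2 t x)) x
        + 2 * N x * c x - π ^ 2 / 2 * α * ε1)
    (hQ1 : ∀ x ξ : ℝ, Q1 x ξ =
      deriv (fun t => deriv (fun s => a s * P1 s ξ) t - b t * P1 t ξ) x
        + deriv (fun s => deriv (fun r => a r * P1 x r) s - b s * P1 x s) ξ
        + (c x + c ξ) * P1 x ξ)
    (hQ2 : ∀ x ξ : ℝ, Q2 x ξ = Q1 ξ x)
    (hQ3def : Q3 = (deriv a 0 - b 0) * N 0 + a 0 * deriv N 0 - π ^ 2 / 2 * α * ε1)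
    (hQ4def : ∀ x : ℝ, Q4 x = 2 * (deriv a 0 - b 0) * P2 0 x
        + 2 * a 0 * deriv (fun t => P2 t x) 0 + π ^ 2 * α * ε1)
    (hQ5 : Q5 = (b 1 - deriv a 1) * N 1 - a 1 * deriv N 1)
    (hQ6 : ∀ x : ℝ, Q6 x = 2 * (b 1 - deriv a 1) * P1 1 x
        - 2 * a 1 * deriv (fun t => P1 t x) 1)
    (hQ7 : Q7 = 2 * a 1 * N 1)
    (hQ8 : ∀ x : ℝ, Q8 x = 2 * a 1 * P1 1 x)
    (hQ3 : Q3 ≤ 0) (hQ4 : ∀ x ∈ Set.Icc 0 1, Q4 x = 0)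
    (O2 : ℝ) (hO2 : O2 ≠ 0)
    (ζ : ℝ) (hζdef : ζ = -(Q5 + Q7 / O2))
    (O1 : ℝ → ℝ) (hO1cont : Continuous O1)
    (hO1 : ∀ x ∈ Set.Icc 0 1,
      semisepOp N P1 P2 O1 x = -(1/2) * (O2 * Q6 x + Q8 x)) :
    ∀ e : ℝ → ℝ, ContDiff ℝ 2 e → deriv e 0 = 0 → e 1 = O2 * deriv e 1 →
      2 * (∫ x in (0:ℝ)..1,
            (a x * iteratedDeriv 2 e x + b x * deriv e x + c x * e x
              + O1 x * deriv e 1) * semisepOp N P1 P2 e x)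
        ≤ (∫ x in (0:ℝ)..1,
              (Q0 x * e x + (∫ ξ in (0:ℝ)..x, Q1 x ξ * e ξ)
                + ∫ ξ in x..(1:ℝ), Q2 x ξ * e ξ) * e x)
          - ζ * (e 1) ^ 2 := by
  obtain rfl : P2 = swap P1 := funext₂ hsym
  intro e he he0 he1
  have hda : Differentiable ℝ a := ha.differentiable two_ne_zero
  have hdN : Differentiable ℝ N := hN.differentiable two_ne_zero
  have hP1' := hP1.of_le one_le_two
  have hP2' := contDiff_uncurry_swap hP1'
  have hQ0_eq : Q0 = fun x =>
      -(π ^ 2 / 2 * (α * ε1)) + lyapunovMultiplier a b c N P1 (swap P1) x := by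
    ext x
    rw [hQ0, lyapunovMultiplier_eq hda hP1' hP2' fun _ => rfl]
    ring
  have hQ1_eq : Q1 = lyapunovKernel a b c P1 (swap P1) :=
    funext₂ fun x ξ => (hQ1 x ξ).trans (lyapunovKernel_swap_eq P1 x ξ).symm
  have hQ2_eq : Q2 = swap (lyapunovKernel a b c P1 (swap P1)) := hQ1_eq ▸ funext₂ hQ2
  have hfluxP2 : ∀ ξ ∈ Set.Icc 0 1,
      actFst (flux a b) (swap P1) 0 ξ = -(π ^ 2 / 2 * (α * ε1)) := fun ξ hξ => by
    rw [actFst_flux_eq hda hP2']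
    linear_combination (hQ4 ξ hξ - hQ4def ξ) / 2
  have hSO1 : ∀ x ∈ Set.Icc 0 1,
      semisepOp N P1 (swap P1) O1 x = O2 * actFst (flux a b) P1 1 x - a 1 * P1 1 x :=
    fun x hx => by
      rw [hO1 x hx, hQ6, hQ8, actFst_flux_eq hda hP1']
      ring
  have hζe : -(ζ * e 1 ^ 2) = 2 * a 1 * N 1 * e 1 * deriv e 1 - flux a b N 1 * e 1 ^ 2 := by
    rw [hζdef, hQ5, hQ7, flux_eq (hda 1) (hdN 1), he1]
    field_simp
    ring
  rw [hQ0_eq, hQ1_eq, hQ2_eq, sub_eq_add_neg, hζe]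
  exact two_mul_integral_diffOp_add_injection_mul_semisepOp_le ha hb hc hN hP1
    (mul_nonneg hα hε1)
    (fun x hx => mul_le_mul (haα x hx) (hNε x hx) hε1 (hα.trans (haα x hx)))
    (by rw [flux_eq (hda 0) (hdN 0)]; linarith) hfluxP2 hO1cont hSO1 he he0 he1

/-- Classical spatial form of Lemma 4 (observer synthesis). -/
theorem observer_synthesis_inequality
    (a b c : ℝ → ℝ) (α : ℝ) (hα : 0 < α)
    (ha : IsPolyFun a) (hb : IsPolyFun b) (hc : IsPolyFun c)
    (haα : ∀ x ∈ Set.Icc (0:ℝ) 1, α ≤ a x)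
    (ε1 : ℝ) (hε1 : 0 < ε1)
    (N : ℝ → ℝ) (P1 P2 : ℝ → ℝ → ℝ)
    (hNp : IsPolyFun N) (hP1p : IsPolyFun2 P1) (hP2p : IsPolyFun2 P2)
    (hsym : ∀ x ξ : ℝ, P2 x ξ = P1 ξ x)
    (hNε : ∀ x ∈ Set.Icc (0:ℝ) 1, ε1 ≤ N x)
    (Q0 Q4 Q6 Q8 : ℝ → ℝ) (Q1 Q2 : ℝ → ℝ → ℝ) (Q3 Q5 Q7 : ℝ)
    (hQ0 : ∀ x : ℝ, Q0 x =
      deriv (fun t => deriv (fun s => a s * N s) t - b t * N t) x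
        + 2 * deriv (fun t => a t * (P1 t x - P2 t x)) x
        + 2 * N x * c x - π ^ 2 / 2 * α * ε1)
    (hQ1 : ∀ x ξ : ℝ, Q1 x ξ =
      deriv (fun t => deriv (fun s => a s * P1 s ξ) t - b t * P1 t ξ) x
        + deriv (fun s => deriv (fun r => a r * P1 x r) s - b s * P1 x s) ξ
        + (c x + c ξ) * P1 x ξ)
    (hQ2 : ∀ x ξ : ℝ, Q2 x ξ = Q1 ξ x)
    (hQ3def : Q3 = (deriv a 0 - b 0) * N 0 + a 0 * deriv N 0 - π ^ 2 / 2 * α * ε1)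
    (hQ4def : ∀ x : ℝ, Q4 x = 2 * (deriv a 0 - b 0) * P2 0 x
        + 2 * a 0 * deriv (fun t => P2 t x) 0 + π ^ 2 * α * ε1)
    (hQ5 : Q5 = (b 1 - deriv a 1) * N 1 - a 1 * deriv N 1)
    (hQ6 : ∀ x : ℝ, Q6 x = 2 * (b 1 - deriv a 1) * P1 1 x
        - 2 * a 1 * deriv (fun t => P1 t x) 1)
    (hQ7 : Q7 = 2 * a 1 * N 1)
    (hQ8 : ∀ x : ℝ, Q8 x = 2 * a 1 * P1 1 x)
    (hQ3 : Q3 ≤ 0) (hQ4 : ∀ x ∈ Set.Icc (0:ℝ) 1, Q4 x = 0)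
    (O2 : ℝ) (hO2 : O2 < 0)
    (ζ : ℝ) (hζdef : ζ = -(Q5 + Q7 / O2)) (hζ : 0 < ζ)
    (O1 : ℝ → ℝ) (hO1cont : Continuous O1)
    (hO1 : ∀ x ∈ Set.Icc (0:ℝ) 1,
      semisepOp N P1 P2 O1 x = -(1/2) * (O2 * Q6 x + Q8 x)) :
    ∀ e : ℝ → ℝ, ContDiff ℝ 2 e → deriv e 0 = 0 → e 1 = O2 * deriv e 1 →
      2 * (∫ x in (0:ℝ)..1,
            (a x * iteratedDeriv 2 e x + b x * deriv e x + c x * e x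
              + O1 x * deriv e 1) * semisepOp N P1 P2 e x)
        ≤ (∫ x in (0:ℝ)..1,
              (Q0 x * e x + (∫ ξ in (0:ℝ)..x, Q1 x ξ * e ξ)
                + ∫ ξ in x..(1:ℝ), Q2 x ξ * e ξ) * e x)
          - ζ * (e 1) ^ 2 := by
  exact observer_synthesis_inequality_general a b c α hα.le ha.contDiff hb.contDiff
    (hc.contDiff (n := 0)).continuous haα ε1 hε1.le N P1 P2 hNp.contDiff hP1p.contDiff hsym hNε
    Q0 Q4 Q6 Q8 Q1 Q2 Q3 Q5 Q7 hQ0 hQ1 hQ2 hQ3def hQ4def hQ5 hQ6 hQ7 hQ8 hQ3 hQ4 O2 hO2.ne ζ hζdef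
    O1 hO1cont hO1

end
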